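/- Let 𝐟 = (f₁,…,f_n) be homogeneous forms of degree d−1 in ℂ[x₁,…,x_n] with nonvanishing resultant, and jac(𝐟) the Jacobian determinant. Then for g ∈ GLₙ(ℂ), jac(𝐟 ∘ g^{-t} · g^{-1}) transforms so that 𝐀((g₁,g₂)·𝐟) = det(g₁g₂) · g₁·𝐀(𝐟), where ((g₁,g₂)·𝐟)(x) = 𝐟(x·g₁^{-t})·g₂^{-1}. -/

import Mathlib

open MvPolynomial Matrix

noncomputable def hess {n : ℕ} (f : MvPolynomial (Fin n) ℂ) : MvPolynomial (Fin n) ℂ :=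
  (Matrix.of fun i j : Fin n => pderiv i (pderiv j f)).det

noncomputable def jacDet {n : ℕ} (f : Fin n → MvPolynomial (Fin n) ℂ) : MvPolynomial (Fin n) ℂ :=
  (Matrix.of fun i j : Fin n => pderiv j (f i)).det

/-- The Jacobian ideal of `f`, generated by its first-order partial derivatives. -/
noncomputable def jacIdeal {n : ℕ} (f : MvPolynomial (Fin n) ℂ) : Ideal (MvPolynomial (Fin n) ℂ) :=
  Ideal.span (Set.range fun i => pderiv i f)

/-- `Af` is the associated form of a nondegenerate form `f` of degree `d` in `n` variables:
it is homogeneous of degree `n*(d-2)` and satisfies the defining identity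
`(y₁x̄₁ + ⋯ + yₙx̄ₙ)^(n(d-2)) = Af(y) ⬝ hess(f)‾` in the Milnor algebra
`M(f) = ℂ[x]/(f_{x₁},…,f_{xₙ})`, for every `y ∈ ℂⁿ`. -/
def IsAssociatedForm (n d : ℕ) (f Af : MvPolynomial (Fin n) ℂ) : Prop :=
  Af.IsHomogeneous (n * (d - 2)) ∧ ∀ y : Fin n → ℂ,
    Ideal.Quotient.mk (jacIdeal f) ((∑ i, C (y i) * X i) ^ (n * (d - 2)))
      = Ideal.Quotient.mk (jacIdeal f) (C (eval y Af) * hess f)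

/-- `Af` is the associated form of the `n`-tuple `f` of forms of degree `d-1`:
it is homogeneous of degree `n*(d-2)` and satisfies
`(y₁x̄₁ + ⋯ + yₙx̄ₙ)^(n(d-2)) = Af(y) ⬝ jac(f)‾` in `M(f) = ℂ[x]/(f₁,…,fₙ)`. -/
def IsAssociatedFormT (n d : ℕ) (f : Fin n → MvPolynomial (Fin n) ℂ)
    (Af : MvPolynomial (Fin n) ℂ) : Prop :=
  Af.IsHomogeneous (n * (d - 2)) ∧ ∀ y : Fin n → ℂ,
    Ideal.Quotient.mk (Ideal.span (Set.range f)) ((∑ i, C (y i) * X i) ^ (n * (d - 2)))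
      = Ideal.Quotient.mk (Ideal.span (Set.range f)) (C (eval y Af) * jacDet f)

/-- Substitution of a linear change of variables: `(substM M f)(x) = f(M ⬝ x)`. -/
noncomputable def substM {n : ℕ} (M : Matrix (Fin n) (Fin n) ℂ) (f : MvPolynomial (Fin n) ℂ) :
    MvPolynomial (Fin n) ℂ :=
  aeval (fun i => ∑ j, C (M i j) * X j) f

/-!
If `T` is a square matrix of polynomials with `T x = (x₁^(N+1), …, xₙ^(N+1))`, then `det T` does
not lie in the ideal `(x₁^(N+1), …, xₙ^(N+1))`: modulo that ideal `det T` does not depend on `T`,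
and for the diagonal choice it is `(x₁⋯xₙ)^N`.

Let `J` be the Jacobian matrix of forms `f` of degree `e` and `I` the ideal they generate. By
Euler's identity `J x = e f`, so if `x_i^(N+1) ∈ I` for all `i`, say `A f = (x_i^(N+1))_i`, the
above applies to `T = e⁻¹ A J`. As `det A` multiplies `I` into `(x_i^(N+1))_i` by Cramer's rule,
`jac f = det J` is not in `I`. When `f` has an associated form, `x_i^N` is congruent to a multiple
of `jac f` modulo `I`, and `x_i jac f ∈ I` by Cramer's rule again, so indeed `x_i^(N+1) ∈ I`.
Therefore a tuple has at most one associated form, and it suffices to check that the right-hand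
side of the equivariance formula is an associated form of the transformed tuple, which follows
from the chain rule.
-/

section Cramer

variable {ι κ R : Type*} [Fintype ι]

theorem span_range_mulVec_le [CommSemiring R] (A : Matrix κ ι R) (v : ι → R) :
    Ideal.span (Set.range (A *ᵥ v)) ≤ Ideal.span (Set.range v) := by
  rw [Ideal.span_le]
  rintro _ ⟨i, rfl⟩
  exact sum_mem fun j _ => Ideal.mul_mem_left _ _ (Ideal.subset_span ⟨j, rfl⟩)

theorem exists_mulVec_eq_of_mem_span [CommSemiring R] {v : ι → R} {w : κ → R}
    (h : ∀ i, w i ∈ Ideal.span (Set.range v)) : ∃ A : Matrix κ ι R, A *ᵥ v = w := by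
  choose A hA using fun i => Ideal.mem_span_range_iff_exists_fun.mp (h i)
  exact ⟨Matrix.of A, funext hA⟩

variable [DecidableEq ι] [CommRing R]

theorem det_mul_mem_of_mulVec_mem {A : Matrix ι ι R} {v : ι → R} {I : Ideal R}
    (h : ∀ i, (A *ᵥ v) i ∈ I) (i : ι) : A.det * v i ∈ I := by
  have hcramer : A.det * v i = (A.adjugate *ᵥ (A *ᵥ v)) i := by
    rw [mulVec_mulVec, adjugate_mul, smul_mulVec, one_mulVec, Pi.smul_apply, smul_eq_mul]
  rw [hcramer]
  exact sum_mem fun j _ => I.mul_mem_left _ (h j)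

theorem det_mul_mem_span_range_mulVec (A : Matrix ι ι R) {v : ι → R} {p : R}
    (hp : p ∈ Ideal.span (Set.range v)) : A.det * p ∈ Ideal.span (Set.range (A *ᵥ v)) := by
  obtain ⟨c, rfl⟩ := Ideal.mem_span_range_iff_exists_fun.mp hp
  rw [Finset.mul_sum]
  refine sum_mem fun i _ => ?_
  rw [mul_left_comm]
  exact Ideal.mul_mem_left _ _
    (det_mul_mem_of_mulVec_mem (fun j => Ideal.subset_span (Set.mem_range_self j)) i)

theorem det_sub_det_updateRow_mem_span {S : Matrix ι ι R} {v w r : ι → R} {k : ι}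
    (hS : S *ᵥ v = w) (hr : r ⬝ᵥ v = w k)
    (hreg : ∀ a, a * v k ∈ Ideal.span (w '' {k}ᶜ) → a ∈ Ideal.span (w '' {k}ᶜ)) :
    S.det - (S.updateRow k r).det ∈ Ideal.span (w '' {k}ᶜ) := by
  have hdiff : S.det - (S.updateRow k r).det = (S.updateRow k (S k - r)).det := by
    rw [sub_eq_iff_eq_add, ← det_updateRow_add, sub_add_cancel, updateRow_eq_self]
  rw [hdiff]
  refine hreg _ (det_mul_mem_of_mulVec_mem (fun j => ?_) k)
  by_cases hj : j = k
  · have hzero : (S.updateRow k (S k - r) *ᵥ v) j = 0 := by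
      have hSk : S k ⬝ᵥ v = w k := congrFun hS k
      rw [hj, updateRow_mulVec, Function.update_self, sub_dotProduct, hSk, hr, sub_self]
    exact hzero ▸ zero_mem _
  · have hrow : (S.updateRow k (S k - r) *ᵥ v) j = w j := by
      simp [updateRow_mulVec, hj, hS]
    exact hrow ▸ Ideal.subset_span ⟨j, hj, rfl⟩

theorem det_sub_det_mem_span_of_mulVec_eq {S T : Matrix ι ι R} {v w : ι → R}
    (hS : S *ᵥ v = w) (hT : T *ᵥ v = w)
    (hreg : ∀ i a, a * v i ∈ Ideal.span (w '' {i}ᶜ) → a ∈ Ideal.span (w '' {i}ᶜ)) :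
    S.det - T.det ∈ Ideal.span (Set.range w) := by
  -- Replace the rows of `S` by those of `T` one at a time; `s` holds the rows still to be replaced.
  suffices h : ∀ (s : Finset ι) (S : Matrix ι ι R), S *ᵥ v = w → (∀ i ∉ s, S i = T i) →
      S.det - T.det ∈ Ideal.span (Set.range w) from h Finset.univ S hS (by simp)
  intro s
  induction s using Finset.induction_on with
  | empty =>
    intro S _ hST
    have hST : S = T := funext fun i => hST i (Finset.notMem_empty i)
    simp [hST]
  | insert k s _ ih =>
    intro S hS hST
    have hr : T k ⬝ᵥ v = w k := congrFun hT k
    have hrow : S.det - (S.updateRow k (T k)).det ∈ Ideal.span (Set.range w) :=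
      Ideal.span_mono (Set.image_subset_range _ _)
        (det_sub_det_updateRow_mem_span hS hr (hreg k))
    have hrest : (S.updateRow k (T k)).det - T.det ∈ Ideal.span (Set.range w) := by
      refine ih _ ?_ fun i hi => ?_
      · rw [updateRow_mulVec, hS, hr, Function.update_eq_self]
      · by_cases hik : i = k
        · rw [hik, updateRow_self]
        · rw [updateRow_ne hik, hST i (by simp [hik, hi])]
    simpa using add_mem hrow hrest

end Cramer

section PowersOfVariables

variable {σ R : Type*}

theorem mem_span_X_pow_image [CommSemiring R] {e : ℕ} {s : Set σ} {p : MvPolynomial σ R} :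
    p ∈ Ideal.span ((fun i => (X i : MvPolynomial σ R) ^ e) '' s) ↔
      ∀ m ∈ p.support, ∃ i ∈ s, e ≤ m i := by
  have himage : (fun i => (X i : MvPolynomial σ R) ^ e) '' s =
      (fun m => monomial m 1) '' ((fun i => Finsupp.single i e) '' s) := by
    simp only [Set.image_image, X_pow_eq_monomial]
  simp [himage, mem_ideal_span_monomial_image, Finsupp.single_le_iff]

theorem mem_span_X_pow_image_of_mul_X_mem [CommSemiring R] {e : ℕ} {s : Set σ} {k : σ}
    (hk : k ∉ s) {p : MvPolynomial σ R}
    (hp : p * X k ∈ Ideal.span ((fun i => (X i : MvPolynomial σ R) ^ e) '' s)) :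
    p ∈ Ideal.span ((fun i => (X i : MvPolynomial σ R) ^ e) '' s) := by
  rw [mem_span_X_pow_image] at hp ⊢
  intro m hm
  obtain ⟨i, hi, hle⟩ := hp (m + Finsupp.single k 1) (by simpa using hm)
  have hki : k ≠ i := fun h => hk (h ▸ hi)
  exact ⟨i, hi, by simpa [hki] using hle⟩

theorem prod_X_pow_notMem_span_X_pow_succ [Fintype σ] [CommSemiring R] [Nontrivial R] (N : ℕ) :
    ∏ i, X i ^ N ∉ Ideal.span (Set.range fun i => (X i : MvPolynomial σ R) ^ (N + 1)) := by
  rw [← Set.image_univ, mem_span_X_pow_image]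
  have hprod : ∏ i, (X i : MvPolynomial σ R) ^ N =
      monomial (Finsupp.equivFunOnFinite.symm fun _ => N) 1 := by
    simp [monomial_eq, Finsupp.prod_fintype]
  intro h
  obtain ⟨i, -, hi⟩ := h (Finsupp.equivFunOnFinite.symm fun _ => N) (by
    classical
    rw [hprod, mem_support_iff, coeff_monomial, if_pos rfl]
    exact one_ne_zero)
  simp at hi

theorem det_notMem_span_X_pow_succ [Fintype σ] [DecidableEq σ] [CommRing R] [Nontrivial R] {N : ℕ}
    {T : Matrix σ σ (MvPolynomial σ R)} (hT : T *ᵥ X = fun i => X i ^ (N + 1)) :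
    T.det ∉ Ideal.span (Set.range fun i => (X i : MvPolynomial σ R) ^ (N + 1)) := by
  have hdiag : diagonal (fun i => (X i : MvPolynomial σ R) ^ N) *ᵥ X = fun i => X i ^ (N + 1) := by
    ext1 i
    rw [mulVec_diagonal, pow_succ]
  have hsub := det_sub_det_mem_span_of_mulVec_eq hT hdiag fun i _ =>
    mem_span_X_pow_image_of_mul_X_mem (by simp)
  rw [det_diagonal] at hsub
  exact fun h => prod_X_pow_notMem_span_X_pow_succ N ((Submodule.sub_mem_iff_right _ h).mp hsub)

end PowersOfVariables

section Jacobian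

variable {σ τ υ R : Type*}

/-- The matrix `(∂fᵢ/∂xⱼ)` of a family `f` of polynomials, whose determinant is `jacDet f` when
there are as many polynomials as variables. -/
noncomputable def jacobianMatrix [CommSemiring R] (f : τ → MvPolynomial σ R) :
    Matrix τ σ (MvPolynomial σ R) :=
  Matrix.of fun i j => pderiv j (f i)

theorem det_jacobianMatrix {n : ℕ} (f : Fin n → MvPolynomial (Fin n) ℂ) :
    (jacobianMatrix f).det = jacDet f := rfl

theorem jacobianMatrix_mulVec_X [Fintype σ] [CommSemiring R] {e : ℕ} {f : τ → MvPolynomial σ R}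
    (hf : ∀ i, (f i).IsHomogeneous e) : jacobianMatrix f *ᵥ X = e • f := by
  ext1 i
  simp [mulVec, dotProduct, jacobianMatrix, ← (hf i).sum_X_mul_pderiv, mul_comm]

theorem jacobianMatrix_C_mulVec [Fintype τ] [CommSemiring R] (A : Matrix υ τ R)
    (f : τ → MvPolynomial σ R) : jacobianMatrix (A.map C *ᵥ f) =
      (A.map C : Matrix υ τ (MvPolynomial σ R)) * jacobianMatrix f := by
  ext1 i j
  simp [jacobianMatrix, mulVec, dotProduct, Matrix.mul_apply]

theorem pderiv_bind₁ [Fintype σ] [CommSemiring R] (g : σ → MvPolynomial υ R) (j : υ)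
    (p : MvPolynomial σ R) :
    pderiv j (bind₁ g p) = ∑ k, bind₁ g (pderiv k p) * pderiv j (g k) := by
  classical
  induction p using MvPolynomial.induction_on with
  | C c => simp
  | add p q hp hq => simp only [map_add, hp, hq, add_mul, Finset.sum_add_distrib]
  | mul_X p i hp =>
    have hterm (k : σ) : bind₁ g (pderiv k (p * X i)) * pderiv j (g k) =
        bind₁ g (pderiv k p) * pderiv j (g k) * g i +
          if k = i then bind₁ g p * pderiv j (g k) else 0 := by
      rw [pderiv_mul, pderiv_X, Pi.single_apply]
      split_ifs <;> simp_all <;> ring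
    simp only [hterm, Finset.sum_add_distrib, ← Finset.sum_mul, ← hp]
    simp [mul_comm]

theorem jacobianMatrix_bind₁ [Fintype σ] [CommSemiring R] (g : σ → MvPolynomial υ R)
    (f : τ → MvPolynomial σ R) :
    jacobianMatrix (fun i => bind₁ g (f i)) =
      (jacobianMatrix f).map (bind₁ g) * jacobianMatrix g := by
  ext1 i j
  simp [jacobianMatrix, Matrix.mul_apply, pderiv_bind₁]

theorem jacobianMatrix_toMvPolynomial [Fintype σ] [CommSemiring R] (M : Matrix τ σ R) :
    jacobianMatrix M.toMvPolynomial = M.map C := by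
  classical
  ext1 i j
  simp [jacobianMatrix, Matrix.toMvPolynomial, ← C_mul_X_eq_monomial, pderiv_X, Pi.single_apply]

theorem det_jacobianMatrix_notMem_span [Fintype σ] [DecidableEq σ] [CommRing R] [Nontrivial R]
    {e N : ℕ} (he : IsUnit (e : R)) {f : σ → MvPolynomial σ R} (hf : ∀ i, (f i).IsHomogeneous e)
    (hX : ∀ i, X i ^ (N + 1) ∈ Ideal.span (Set.range f)) :
    (jacobianMatrix f).det ∉ Ideal.span (Set.range f) := by
  intro hjac
  obtain ⟨c, hc⟩ := he.exists_left_inv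
  obtain ⟨A, hA⟩ := exists_mulVec_eq_of_mem_span hX
  have hT : ((C c : MvPolynomial σ R) • (A * jacobianMatrix f)) *ᵥ X = fun i => X i ^ (N + 1) := by
    have hce : (C c : MvPolynomial σ R) * e = 1 := by
      rw [← map_natCast (C : R →+* MvPolynomial σ R), ← C_mul, hc, C_1]
    rw [smul_mulVec, ← mulVec_mulVec, jacobianMatrix_mulVec_X hf, mulVec_smul, hA,
      ← Nat.cast_smul_eq_nsmul (MvPolynomial σ R), smul_smul, hce, one_smul]
  refine det_notMem_span_X_pow_succ hT ?_
  have hdet := det_mul_mem_span_range_mulVec A hjac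
  rw [hA] at hdet
  rw [det_smul, det_mul]
  exact Ideal.mul_mem_left _ _ hdet

end Jacobian

section LinearAction

variable {n : ℕ}

theorem substM_eq_bind₁ (M : Matrix (Fin n) (Fin n) ℂ) (p : MvPolynomial (Fin n) ℂ) :
    substM M p = bind₁ M.toMvPolynomial p := by
  simp only [substM, aeval_eq_bind₁, C_mul_X_eq_monomial]
  rfl

theorem eval_substM (M : Matrix (Fin n) (Fin n) ℂ) (y : Fin n → ℂ) (p : MvPolynomial (Fin n) ℂ) :
    eval y (substM M p) = eval (M *ᵥ y) p := by
  induction p using MvPolynomial.induction_on with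
  | C c => simp [substM]
  | add p q hp hq => simpa [substM] using congrArg₂ (· + ·) hp hq
  | mul_X p i hp => simpa [substM, mulVec, dotProduct] using congrArg (· * (M *ᵥ y) i) hp

theorem substM_linearForm (M : Matrix (Fin n) (Fin n) ℂ) (y : Fin n → ℂ) :
    substM M (∑ i, C (y i) * X i) = ∑ i, C ((Mᵀ *ᵥ y) i) * X i := by
  simp only [substM, map_sum, map_mul, algHom_C, algebraMap_eq, aeval_X, Finset.mul_sum]
  rw [Finset.sum_comm]
  simp only [mulVec, dotProduct, transpose_apply, map_sum, C_mul, Finset.sum_mul]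
  exact Finset.sum_congr rfl fun i _ => Finset.sum_congr rfl fun j _ => by ring

theorem isHomogeneous_substM (M : Matrix (Fin n) (Fin n) ℂ) {p : MvPolynomial (Fin n) ℂ} {e : ℕ}
    (hp : p.IsHomogeneous e) : (substM M p).IsHomogeneous e := by
  rw [substM_eq_bind₁]
  simpa using hp.aeval _ M.toMvPolynomial_isHomogeneous

theorem isHomogeneous_C_mulVec {σ τ υ R : Type*} [Fintype τ] [CommSemiring R] (A : Matrix υ τ R)
    {f : τ → MvPolynomial σ R} {e : ℕ} (hf : ∀ i, (f i).IsHomogeneous e) (i : υ) :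
    ((A.map C *ᵥ f) i).IsHomogeneous e :=
  IsHomogeneous.sum _ _ _ fun j _ => (hf j).C_mul _

theorem jacDet_substM (M : Matrix (Fin n) (Fin n) ℂ) (f : Fin n → MvPolynomial (Fin n) ℂ) :
    jacDet (fun i => substM M (f i)) = C M.det * substM M (jacDet f) := by
  simp only [← det_jacobianMatrix, substM_eq_bind₁]
  rw [jacobianMatrix_bind₁, jacobianMatrix_toMvPolynomial, det_mul, mul_comm, RingHom.map_det,
    AlgHom.map_det]
  rfl

theorem jacDet_C_mulVec (A : Matrix (Fin n) (Fin n) ℂ) (f : Fin n → MvPolynomial (Fin n) ℂ) :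
    jacDet (A.map C *ᵥ f) = C A.det * jacDet f := by
  rw [← det_jacobianMatrix, jacobianMatrix_C_mulVec, det_mul, RingHom.map_det]
  rfl

end LinearAction

namespace IsAssociatedFormT

variable {n d : ℕ} {f : Fin n → MvPolynomial (Fin n) ℂ} {Af : MvPolynomial (Fin n) ℂ}

theorem linearForm_pow_sub_mem_span (h : IsAssociatedFormT n d f Af) (y : Fin n → ℂ) :
    (∑ i, C (y i) * X i) ^ (n * (d - 2)) - C (eval y Af) * jacDet f ∈ Ideal.span (Set.range f) :=
  Ideal.Quotient.eq.mp (h.2 y)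

theorem X_pow_mem_span (h : IsAssociatedFormT n d f Af) (hf : ∀ i, (f i).IsHomogeneous (d - 1))
    (i : Fin n) : X i ^ (n * (d - 2) + 1) ∈ Ideal.span (Set.range f) := by
  have hjac : jacDet f * X i ∈ Ideal.span (Set.range f) := by
    refine det_mul_mem_of_mulVec_mem (A := jacobianMatrix f) (fun j => ?_) i
    rw [jacobianMatrix_mulVec_X hf]
    exact nsmul_mem (Ideal.subset_span (Set.mem_range_self j)) _
  have hpow := Ideal.mul_mem_right (X i) _ (h.linearForm_pow_sub_mem_span (Pi.single i 1))
  have hlin : ∑ j, C ((Pi.single i 1 : Fin n → ℂ) j) * X j = X i := by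
    simp [Pi.single_apply]
  rw [hlin, sub_mul, ← pow_succ, mul_assoc] at hpow
  exact (Submodule.sub_mem_iff_left _ (Ideal.mul_mem_left _ _ hjac)).mp hpow

theorem jacDet_notMem_span (h : IsAssociatedFormT n d f Af) (hd : 2 ≤ d)
    (hf : ∀ i, (f i).IsHomogeneous (d - 1)) : jacDet f ∉ Ideal.span (Set.range f) :=
  det_jacobianMatrix_notMem_span (IsUnit.mk0 _ (Nat.cast_ne_zero.mpr (by omega))) hf
    (h.X_pow_mem_span hf)

theorem unique {Af' : MvPolynomial (Fin n) ℂ} (h : IsAssociatedFormT n d f Af)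
    (h' : IsAssociatedFormT n d f Af') (hd : 2 ≤ d) (hf : ∀ i, (f i).IsHomogeneous (d - 1)) :
    Af = Af' := by
  refine MvPolynomial.funext fun y => ?_
  have hsub := sub_mem (h'.linearForm_pow_sub_mem_span y) (h.linearForm_pow_sub_mem_span y)
  rw [sub_sub_sub_cancel_left, ← sub_mul, ← C_sub] at hsub
  by_contra hne
  exact h.jacDet_notMem_span hd hf ((Ideal.unit_mul_mem_iff_mem _
    ((IsUnit.mk0 _ (sub_ne_zero.mpr hne)).map C)).mp hsub)

theorem C_mulVec (h : IsAssociatedFormT n d f Af) {A : Matrix (Fin n) (Fin n) ℂ}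
    (hA : IsUnit A.det) : IsAssociatedFormT n d (A.map C *ᵥ f) (C A.det⁻¹ * Af) := by
  refine ⟨h.1.C_mul _, fun y => Ideal.Quotient.eq.mpr ?_⟩
  have hspan : Ideal.span (Set.range f) ≤ Ideal.span (Set.range (A.map C *ᵥ f)) := by
    have hinv : (A⁻¹).map C *ᵥ (A.map C *ᵥ f) = f := by
      rw [mulVec_mulVec, ← Matrix.map_mul, nonsing_inv_mul _ hA, Matrix.map_one C C_0 C_1,
        one_mulVec]
    calc Ideal.span (Set.range f)
        = Ideal.span (Set.range ((A⁻¹).map C *ᵥ (A.map C *ᵥ f))) := by rw [hinv]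
      _ ≤ Ideal.span (Set.range (A.map C *ᵥ f)) := span_range_mulVec_le _ _
  have hjac : C (eval y (C A.det⁻¹ * Af)) * jacDet (A.map C *ᵥ f) = C (eval y Af) * jacDet f := by
    rw [jacDet_C_mulVec, ← mul_assoc, ← C_mul, eval_mul, eval_C, mul_right_comm,
      inv_mul_cancel₀ hA.ne_zero, one_mul]
  rw [hjac]
  exact hspan (h.linearForm_pow_sub_mem_span y)

theorem substM_tuple (h : IsAssociatedFormT n d f Af) {M : Matrix (Fin n) (Fin n) ℂ}
    (hM : IsUnit M.det) :
    IsAssociatedFormT n d (fun i => substM M (f i)) (C M.det⁻¹ * substM M⁻¹ᵀ Af) := by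
  refine ⟨(isHomogeneous_substM _ h.1).C_mul _, fun y => Ideal.Quotient.eq.mpr ?_⟩
  have hlin : ∑ i, C (y i) * X i = substM M (∑ i, C ((M⁻¹ᵀ *ᵥ y) i) * X i) := by
    rw [substM_linearForm, mulVec_mulVec, ← transpose_mul, nonsing_inv_mul _ hM, transpose_one,
      one_mulVec]
  have hjac : C (eval y (C M.det⁻¹ * substM M⁻¹ᵀ Af)) * jacDet (fun i => substM M (f i)) =
      C (eval (M⁻¹ᵀ *ᵥ y) Af) * substM M (jacDet f) := by
    rw [jacDet_substM, ← mul_assoc, ← C_mul, eval_mul, eval_C, eval_substM, mul_right_comm,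
      inv_mul_cancel₀ hM.ne_zero, one_mul]
  have hmem := Ideal.mem_map_of_mem (bind₁ M.toMvPolynomial)
    (h.linearForm_pow_sub_mem_span (M⁻¹ᵀ *ᵥ y))
  rw [Ideal.map_span, ← Set.range_comp, map_sub, map_pow, map_mul, bind₁_C_right] at hmem
  rw [hlin, hjac]
  simpa only [substM_eq_bind₁, Function.comp_def] using hmem

end IsAssociatedFormT

/-- Equivariance of the associated form of an `n`-tuple: for `𝐟 = (f₁,…,fₙ)` of degree `d-1`
with nonvanishing resultant (no common zero away from the origin) and `g₁, g₂ ∈ GLₙ(ℂ)`,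
one has `𝐀((g₁,g₂)·𝐟) = det(g₁g₂) · g₁·𝐀(𝐟)`, where `((g₁,g₂)·𝐟)(x) = 𝐟(x·g₁⁻ᵗ)·g₂⁻¹`. -/
theorem associatedFormT_equivariance (n d : ℕ) (hn : 2 ≤ n) (hd : 3 ≤ d)
    (f : Fin n → MvPolynomial (Fin n) ℂ) (hf : ∀ i, (f i).IsHomogeneous (d - 1))
    (hres : ∀ x : Fin n → ℂ, (∀ i, eval x (f i) = 0) → x = 0)
    (g₁ g₂ : Matrix (Fin n) (Fin n) ℂ) (hg₁ : IsUnit g₁.det) (hg₂ : IsUnit g₂.det)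
    (Af Agf : MvPolynomial (Fin n) ℂ)
    (hAf : IsAssociatedFormT n d f Af)
    (hAgf : IsAssociatedFormT n d
      (fun i => ∑ j, C (g₂⁻¹ j i) * substM g₁⁻¹ (f j)) Agf) :
    Agf = C ((g₁ * g₂).det) * substM g₁ᵀ Af := by
  have hg₁' : IsUnit (g₁⁻¹).det := isUnit_nonsing_inv_det _ hg₁
  have hg₂' : IsUnit (g₂⁻¹)ᵀ.det := isUnit_det_transpose _ (isUnit_nonsing_inv_det _ hg₂)
  have htransform := (hAf.substM_tuple hg₁').C_mulVec hg₂'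
  have hform : ∀ i, (((g₂⁻¹)ᵀ.map C *ᵥ fun j => substM g₁⁻¹ (f j)) i).IsHomogeneous (d - 1) :=
    isHomogeneous_C_mulVec _ fun j => isHomogeneous_substM _ (hf j)
  have hdet : ((g₂⁻¹)ᵀ.det)⁻¹ * ((g₁⁻¹).det)⁻¹ = (g₁ * g₂).det := by
    simp only [det_transpose, det_nonsing_inv, Ring.inverse_eq_inv', inv_inv, det_mul, mul_comm]
  calc Agf = C ((g₂⁻¹)ᵀ.det)⁻¹ * (C ((g₁⁻¹).det)⁻¹ * substM (g₁⁻¹)⁻¹ᵀ Af) :=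
        hAgf.unique htransform (by omega) hform
    _ = C ((g₁ * g₂).det) * substM g₁ᵀ Af := by
        rw [← mul_assoc, ← C_mul, hdet, nonsing_inv_nonsing_inv _ hg₁]
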